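/- Let X be a geometric tree and T a generic cellular merge tree with n leaves. Then the space Conf_Min(X,T) of configurations of disjoint connected closed subsets (X₁,…,Xₙ) of X satisfying the convex-hull compatibility condition deformation retracts onto the subspace Conf(X,T) of point configurations; in particular they are homotopy equivalent. -/

import Mathlib

open scoped Classical

noncomputable section

instance dartTop {V : Type*} (G : SimpleGraph V) : TopologicalSpace G.Dart := ⊥

/-- Gluing relation for the geometric realization of a graph: one copy of `[0,1]` per
oriented edge, opposite orientations identified by `t ↦ 1-t`, and starting points of edges
with the same initial vertex identified. -/
def treeRel {V : Type*} (G : SimpleGraph V) :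
    (G.Dart × ↥(Set.Icc (0:ℝ) 1)) → (G.Dart × ↥(Set.Icc (0:ℝ) 1)) → Prop :=
  fun p q =>
    (p.1 = q.1.symm ∧ (p.2 : ℝ) = 1 - (q.2 : ℝ)) ∨
    (p.1.toProd.1 = q.1.toProd.1 ∧ (p.2 : ℝ) = 0 ∧ (q.2 : ℝ) = 0)

/-- The geometric realization of a graph. -/
def TreeSpace {V : Type*} (G : SimpleGraph V) := Quot (treeRel G)

instance {V : Type*} (G : SimpleGraph V) : TopologicalSpace (TreeSpace G) :=
  instTopologicalSpaceQuot
/-- Combinatorial data for a cellular merge tree: a finite rooted tree with a real value at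
each node, strictly increasing towards the root; the root carries an infinite upward ray. -/
structure MergeTreeData where
  n : ℕ
  parent : Fin n → Fin n
  root : Fin n
  hroot : parent root = root
  hreach : ∀ v, ∃ k, parent^[k] v = root
  val : Fin n → ℝ
  hval : ∀ v, v ≠ root → val v < val (parent v)

namespace MergeTreeData

variable (d : MergeTreeData)

/-- Points of the edge attached below each node (for the root: the infinite upward ray). -/
def Carrier : Set (Fin d.n × ℝ) :=
  {p | d.val p.1 ≤ p.2 ∧ (p.1 ≠ d.root → p.2 ≤ d.val (d.parent p.1))}

/-- Glue the top of each edge to the bottom of the parent's edge. -/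
def glueRel : ↥d.Carrier → ↥d.Carrier → Prop := fun a b =>
  a.1.2 = b.1.2 ∧ d.parent a.1.1 = b.1.1 ∧ a.1.2 = d.val (d.parent a.1.1)

/-- The geometric realization of the cellular merge tree `d`. -/
def Space := Quot d.glueRel

instance : TopologicalSpace d.Space := instTopologicalSpaceQuot

/-- The gauge of the canonical cellular merge tree. -/
def gauge : d.Space → ℝ := Quot.lift (fun a => a.1.2) (fun _ _ h => h.1)

/-- `v` is a descendant of `w` (possibly `v = w`). -/
def Desc (v w : Fin d.n) : Prop := ∃ k, d.parent^[k] v = w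

def IsLeafNode (v : Fin d.n) : Prop := ∀ w, d.parent w = v → w = v

def IsBranchNode (v : Fin d.n) : Prop := 2 ≤ Nat.card {w : Fin d.n // d.parent w = v ∧ w ≠ v}

/-- Generic: binary (each node has zero or two children) and leaves take distinct values. -/
def Generic : Prop :=
  (∀ v, Nat.card {w : Fin d.n // d.parent w = v ∧ w ≠ v} = 0 ∨
        Nat.card {w : Fin d.n // d.parent w = v ∧ w ≠ v} = 2) ∧
  ∀ v w, d.IsLeafNode v → d.IsLeafNode w → v ≠ w → d.val v ≠ d.val w

/-- `a` is the least common ancestor of `u` and `w`. -/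
def IsLCA (u w a : Fin d.n) : Prop :=
  d.Desc u a ∧ d.Desc w a ∧ ∀ b, d.Desc u b → d.Desc w b → d.Desc a b

/-- The type of leaves. -/
def Leaf := {v : Fin d.n // d.IsLeafNode v}

end MergeTreeData

/-- Isomorphism of gauged spaces: a homeomorphism commuting with the gauges. -/
def GaugedIso {A B : Type*} [TopologicalSpace A] [TopologicalSpace B]
    (πA : A → ℝ) (πB : B → ℝ) : Prop :=
  ∃ e : A ≃ₜ B, ∀ x, πB (e x) = πA x

/-- A gauged space is a cellular merge tree if it is isomorphic (as a gauged space) to the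
realization of some combinatorial merge tree data. -/
def IsCellularMergeTree {A : Type*} [TopologicalSpace A] (π : A → ℝ) : Prop :=
  ∃ d : MergeTreeData, GaugedIso d.gauge π
/-- The convex hull of a subset of a tree: the intersection of all closed connected
(preconnected) supersets. -/
def ConvH {X : Type*} [TopologicalSpace X] (A : Set X) : Set X :=
  ⋂₀ {C : Set X | A ⊆ C ∧ IsClosed C ∧ IsPreconnected C}

/-- The hull `Conv(v)` associated to a node `v`: convex hull of the union of the sets
indexed by the leaves descendant from `v`. -/
def hullOf {X : Type*} [TopologicalSpace X] (d : MergeTreeData)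
    (F : d.Leaf → Set X) (v : Fin d.n) : Set X :=
  ConvH (⋃ l : d.Leaf, if d.Desc l.1 v then F l else ∅)

/-- The hull-compatibility constraint defining the constrained configuration spaces: hulls
of incomparable nodes are disjoint. -/
def HullCond {X : Type*} [TopologicalSpace X] (d : MergeTreeData) (F : d.Leaf → Set X) : Prop :=
  ∀ v w : Fin d.n, (hullOf d F v ∩ hullOf d F w).Nonempty → d.Desc v w ∨ d.Desc w v

/-- Membership in the constrained point configuration space `Conf(X,T)`. -/
def ConfCond {X : Type*} [TopologicalSpace X] (d : MergeTreeData) (x : d.Leaf → X) : Prop :=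
  Function.Injective x ∧ HullCond d (fun l => ({x l} : Set X))

open TopologicalSpace in
/-- Membership in `Conf_Min(X,T)`: a tuple of disjoint nonempty closed connected subsets
(encoded as nonempty compact subsets of the compact metric tree) satisfying the hull
condition. -/
def MinCond {X : Type*} [MetricSpace X] (d : MergeTreeData)
    (F : d.Leaf → NonemptyCompacts X) : Prop :=
  (∀ l, IsConnected (F l : Set X)) ∧
  (Pairwise fun l l' => Disjoint ((F l : Set X)) ((F l' : Set X))) ∧
  HullCond d (fun l => (F l : Set X))

/-! A truncation `τ` of a tree pushes every point of height above `s` down towards the root until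
it has height `s`. Since the fibres of the height function are discrete, `τ s` is constant on
connected sets lying above height `s`, and it maps a connected set reaching down to height `s` into
itself. Hence moving `s` from the maximal to the minimal height of a compact connected `K` shrinks
`K` inside itself to a point. Both heights depend continuously on `K`, and the hull condition
passes to smaller sets, so all components of a configuration can be shrunk at once. On the
realization of a combinatorial tree, the height is the distance from a root vertex, and `τ` moves
points along the unique paths to the root. -/

open Set Topology TopologicalSpace unitInterval
open scoped NNReal

section Extrema

variable {α : Type*} [ConditionallyCompleteLinearOrder α] [TopologicalSpace α] [OrderTopology α]

theorem continuous_sInf_nonemptyCompacts :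
    Continuous fun K : NonemptyCompacts α => sInf (K : Set α) := by
  refine OrderTopology.continuous_iff.2 fun b => ⟨?_, ?_⟩
  · convert NonemptyCompacts.isOpen_subsets_of_isOpen (isOpen_Ioi : IsOpen (Ioi b)) using 1
    ext K
    simpa [subset_def] using K.isCompact.lt_sInf_iff_of_continuous K.nonempty continuousOn_id b
  · convert NonemptyCompacts.isOpen_inter_nonempty_of_isOpen (isOpen_Iio : IsOpen (Iio b)) using 1
    ext K
    exact csInf_lt_iff K.isCompact.bddBelow K.nonempty

theorem continuous_sSup_nonemptyCompacts :
    Continuous fun K : NonemptyCompacts α => sSup (K : Set α) :=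
  continuous_sInf_nonemptyCompacts (α := αᵒᵈ)

end Extrema

/-- A height function on a rooted tree together with the maps `truncate s` that move every point of
height above `s` down towards the root until it has height `s`. The root is not part of the data;
the discrete fibres of the height encode that the tree is one-dimensional. -/
structure HeightTruncation (X : Type*) [TopologicalSpace X] where
  height : X → ℝ≥0
  truncate : ℝ≥0 → X → X
  continuous_height : Continuous height
  continuous_truncate : Continuous (Function.uncurry truncate)
  isDiscrete_fiber : ∀ s, IsDiscrete (height ⁻¹' {s})
  height_truncate : ∀ s x, height (truncate s x) = min s (height x)
  truncate_of_height_le : ∀ {s x}, height x ≤ s → truncate s x = x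

namespace HeightTruncation

variable {X : Type*} [TopologicalSpace X]

/-- The height truncation of a discrete space, in which every point is a root. -/
def ofDiscreteTopology [DiscreteTopology X] : HeightTruncation X where
  height _ := 0
  truncate _ x := x
  continuous_height := continuous_const
  continuous_truncate := continuous_snd
  isDiscrete_fiber _ := ⟨inferInstance⟩
  height_truncate _ _ := (min_eq_right bot_le).symm
  truncate_of_height_le _ := rfl

/-- The transport of a height truncation along a homeomorphism. -/
def comap {Y : Type*} [TopologicalSpace Y] (T : HeightTruncation Y) (e : X ≃ₜ Y) :
    HeightTruncation X where
  height x := T.height (e x)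
  truncate s x := e.symm (T.truncate s (e x))
  continuous_height := T.continuous_height.comp e.continuous
  continuous_truncate :=
    e.symm.continuous.comp (T.continuous_truncate.comp (continuous_id.prodMap e.continuous))
  isDiscrete_fiber s :=
    (T.isDiscrete_fiber s).preimage e.continuous.continuousOn e.injective
  height_truncate s x := by simp only [e.apply_symm_apply, T.height_truncate]
  truncate_of_height_le h := by simp only [T.truncate_of_height_le h, e.symm_apply_apply]

variable (T : HeightTruncation X)

theorem continuous_truncate_left (s : ℝ≥0) : Continuous (T.truncate s) :=
  T.continuous_truncate.comp (Continuous.prodMk_right s)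

section Preconnected

variable {A : Set X} {s : ℝ≥0} {x y : X}

theorem truncate_eq_truncate (hA : IsPreconnected A) (hs : ∀ z ∈ A, s ≤ T.height z)
    (hx : x ∈ A) (hy : y ∈ A) : T.truncate s x = T.truncate s y :=
  hA.constant_of_mapsTo (T.isDiscrete_fiber s) (T.continuous_truncate_left s).continuousOn
    (fun z hz => (T.height_truncate s z).trans (min_eq_left (hs z hz))) hx hy

theorem isOpen_setOf_lt_height_and_truncate_eq (hx : T.height x = s) :
    IsOpen {z | s < T.height z ∧ T.truncate s z = x} := by
  obtain ⟨U, hU, hUx⟩ := isOpen_inter_eq_singleton_of_mem_discrete (T.isDiscrete_fiber s) hx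
  have hopen : IsOpen ({z | s < T.height z} ∩ T.truncate s ⁻¹' U) :=
    (isOpen_lt continuous_const T.continuous_height).inter
      (hU.preimage (T.continuous_truncate_left s))
  convert hopen using 1
  ext z
  refine and_congr_right fun hz => ?_
  have hmem : T.truncate s z ∈ T.height ⁻¹' {s} :=
    (T.height_truncate s z).trans (min_eq_left hz.le)
  rw [← mem_singleton_iff, ← hUx, mem_inter_iff, and_iff_left hmem, mem_preimage]

-- If `truncate s x ∉ A`, then the points of `A` with the same truncation as `x` all lie above
-- height `s`, so they form a relatively clopen subset of `A`.
theorem truncate_mem [T1Space X] (hA : IsPreconnected A) (hy : y ∈ A) (hys : T.height y ≤ s)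
    (hx : x ∈ A) : T.truncate s x ∈ A := by
  by_contra hxA
  have lt_of_eq : ∀ z ∈ A, T.truncate s z = T.truncate s x → s < T.height z := by
    intro z hz hzx
    by_contra! hzs
    exact hxA (hzx ▸ (T.truncate_of_height_le hzs).symm ▸ hz)
  have height_eq : T.height (T.truncate s x) = s :=
    (T.height_truncate s x).trans (min_eq_left (lt_of_eq x hx rfl).le)
  obtain ⟨z, -, hz, hz'⟩ := hA _ _ (T.isOpen_setOf_lt_height_and_truncate_eq height_eq)
    (isOpen_ne.preimage (T.continuous_truncate_left s))
    (fun z hz => (em _).imp (fun h => ⟨lt_of_eq z hz h, h⟩) id)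
    ⟨x, hx, lt_of_eq x hx rfl, rfl⟩ ⟨y, hy, fun h => (lt_of_eq y hy h).not_ge hys⟩
  exact hz' hz.2

end Preconnected

section Extrema

/-- The least height of a point of a compact set. -/
def minHeight (K : NonemptyCompacts X) : ℝ≥0 := sInf (T.height '' K)

/-- The greatest height of a point of a compact set. -/
def maxHeight (K : NonemptyCompacts X) : ℝ≥0 := sSup (T.height '' K)

theorem continuous_minHeight : Continuous T.minHeight :=
  continuous_sInf_nonemptyCompacts.comp T.continuous_height.nonemptyCompacts_map

theorem continuous_maxHeight : Continuous T.maxHeight :=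
  continuous_sSup_nonemptyCompacts.comp T.continuous_height.nonemptyCompacts_map

variable {K : NonemptyCompacts X} {x : X}

theorem minHeight_le_height (hx : x ∈ K) : T.minHeight K ≤ T.height x :=
  csInf_le (OrderBot.bddBelow _) (mem_image_of_mem _ hx)

theorem height_le_maxHeight (hx : x ∈ K) : T.height x ≤ T.maxHeight K :=
  le_csSup (K.isCompact.image T.continuous_height).bddAbove (mem_image_of_mem _ hx)

theorem minHeight_le_maxHeight : T.minHeight K ≤ T.maxHeight K :=
  let ⟨_, hx⟩ := K.nonempty
  (T.minHeight_le_height hx).trans (T.height_le_maxHeight hx)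

variable (K) in
theorem exists_height_eq_minHeight : ∃ x ∈ K, T.height x = T.minHeight K :=
  (K.isCompact.image T.continuous_height).sInf_mem (K.nonempty.image _)

end Extrema

section Contraction

/-- The height at which the contraction truncates the compact set `K` at time `u`. -/
def level (u : I) (K : NonemptyCompacts X) : ℝ≥0 :=
  toNNReal (σ u) * T.maxHeight K + toNNReal u * T.minHeight K

theorem continuous_level : Continuous fun p : I × NonemptyCompacts X => T.level p.1 p.2 := by
  have := T.continuous_minHeight
  have := T.continuous_maxHeight
  unfold level
  fun_prop

theorem minHeight_le_level (u : I) (K : NonemptyCompacts X) : T.minHeight K ≤ T.level u K :=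
  calc T.minHeight K = toNNReal (σ u) * T.minHeight K + toNNReal u * T.minHeight K := by
        rw [← add_mul, toNNReal_symm_add_toNNReal, one_mul]
    _ ≤ T.level u K := by
        unfold level
        gcongr
        exact T.minHeight_le_maxHeight

/-- The contraction of compact sets towards their lowest points, from the identity at time `0` to
truncation at the minimal height at time `1`. -/
def contract (u : I) (K : NonemptyCompacts X) : NonemptyCompacts X :=
  K.map (T.truncate (T.level u K)) (T.continuous_truncate_left _)

theorem continuous_contract : Continuous fun p : I × NonemptyCompacts X => T.contract p.1 p.2 := by
  have continuous_truncate_level :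
      Continuous fun q : (I × NonemptyCompacts X) × X => T.truncate (T.level q.1.1 q.1.2) q.2 :=
    T.continuous_truncate.comp ((T.continuous_level.comp continuous_fst).prodMk continuous_snd)
  exact continuous_snd.nonemptyCompacts_map'
    (g := fun p : I × NonemptyCompacts X => T.truncate (T.level p.1 p.2)) continuous_truncate_level

variable {K : NonemptyCompacts X}

theorem contract_of_height_le_level {u : I} (h : ∀ x ∈ K, T.height x ≤ T.level u K) :
    T.contract u K = K :=
  SetLike.coe_injective <|
    (image_congr fun x hx => T.truncate_of_height_le (h x hx)).trans (image_id' _)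

variable (K) in
theorem contract_zero : T.contract 0 K = K :=
  T.contract_of_height_le_level fun x hx => by simpa [level] using T.height_le_maxHeight hx

theorem contract_of_subsingleton (hK : (K : Set X).Subsingleton) (u : I) : T.contract u K = K := by
  obtain ⟨c, hc, hcmin⟩ := T.exists_height_eq_minHeight K
  refine T.contract_of_height_le_level fun x hx => ?_
  rw [hK hx hc, hcmin]
  exact T.minHeight_le_level u K

theorem isConnected_contract (hK : IsConnected (K : Set X)) (u : I) :
    IsConnected (T.contract u K : Set X) :=
  hK.image _ (T.continuous_truncate_left _).continuousOn

theorem contract_subset [T1Space X] (hK : IsPreconnected (K : Set X)) (u : I) :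
    (T.contract u K : Set X) ⊆ K := by
  obtain ⟨c, hc, hcmin⟩ := T.exists_height_eq_minHeight K
  rintro _ ⟨x, hx, rfl⟩
  exact T.truncate_mem hK hc (hcmin.trans_le (T.minHeight_le_level u K)) hx

theorem contract_one_subsingleton (hK : IsPreconnected (K : Set X)) :
    (T.contract 1 K : Set X).Subsingleton := by
  have level_one : T.level 1 K = T.minHeight K := by simp [level]
  rintro _ ⟨x, hx, rfl⟩ _ ⟨y, hy, rfl⟩
  exact T.truncate_eq_truncate hK (fun z hz => level_one.trans_le (T.minHeight_le_height hz)) hx hy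

end Contraction

end HeightTruncation

section Configurations

theorem ConvH_mono {X : Type*} [TopologicalSpace X] {A B : Set X} (h : A ⊆ B) :
    ConvH A ⊆ ConvH B :=
  sInter_subset_sInter fun _ hC => ⟨h.trans hC.1, hC.2⟩

theorem hullOf_mono {X : Type*} [TopologicalSpace X] (d : MergeTreeData)
    {F F' : d.Leaf → Set X} (h : ∀ l, F' l ⊆ F l) (v : Fin d.n) :
    hullOf d F' v ⊆ hullOf d F v :=
  ConvH_mono <| iUnion_mono fun l => by
    split_ifs
    exacts [h l, subset_rfl]

theorem HullCond.mono {X : Type*} [TopologicalSpace X] {d : MergeTreeData}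
    {F F' : d.Leaf → Set X} (hF : HullCond d F) (h : ∀ l, F' l ⊆ F l) : HullCond d F' :=
  fun v w hvw => hF v w <| hvw.mono <| inter_subset_inter (hullOf_mono d h v) (hullOf_mono d h w)

variable {X : Type*} [MetricSpace X] {d : MergeTreeData}

theorem MinCond.mono {F F' : d.Leaf → NonemptyCompacts X} (hF : MinCond d F)
    (h : ∀ l, (F' l : Set X) ⊆ F l) (hc : ∀ l, IsConnected (F' l : Set X)) : MinCond d F' :=
  ⟨hc, fun _ _ hl => (hF.2.1 hl).mono (h _) (h _), hF.2.2.mono h⟩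

theorem MinCond.contract (T : HeightTruncation X) {F : d.Leaf → NonemptyCompacts X}
    (hF : MinCond d F) (u : I) : MinCond d fun l => T.contract u (F l) :=
  hF.mono (fun l => T.contract_subset (hF.1 l).isPreconnected u)
    fun l => T.isConnected_contract (hF.1 l) u

variable (d) in
/-- The componentwise contraction of configurations satisfying `MinCond`, as a homotopy. -/
def HeightTruncation.contractConf (T : HeightTruncation X) :
    C(I × {F : d.Leaf → NonemptyCompacts X // MinCond d F},
      {F : d.Leaf → NonemptyCompacts X // MinCond d F}) where
  toFun p := ⟨fun l => T.contract p.1 (p.2.1 l), p.2.2.contract T p.1⟩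
  continuous_toFun := Continuous.subtype_mk (continuous_pi fun l => T.continuous_contract.comp <|
    continuous_fst.prodMk <| (continuous_apply l).comp <|
      continuous_subtype_val.comp continuous_snd) _

end Configurations

namespace TreeSpace

section Realization

variable {V : Type*} {G : SimpleGraph V}

instance : DiscreteTopology G.Dart := ⟨rfl⟩

/-- The point at parameter `t` of the edge traversed by the dart `e`, where `t` is clamped to
`[0,1]`. -/
def edgePoint (e : G.Dart) (t : ℝ) : TreeSpace G :=
  Quot.mk _ (e, projIcc 0 1 zero_le_one t)

theorem continuous_edgePoint (e : G.Dart) : Continuous (edgePoint e) :=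
  continuous_quot_mk.comp (by fun_prop)

theorem mk_eq_edgePoint (e : G.Dart) (t : I) :
    (Quot.mk _ (e, t) : TreeSpace G) = edgePoint e t := by
  rw [edgePoint, projIcc_val]

theorem edgePoint_symm (e : G.Dart) (t : ℝ) : edgePoint e.symm t = edgePoint e (1 - t) := by
  refine Quot.sound (Or.inl ⟨rfl, ?_⟩)
  simp only [coe_projIcc]
  grind

/-- The point `x` of the realization is the vertex `a`. This is a relation because the realization
has no point for an isolated vertex. -/
def IsVertex (x : TreeSpace G) (a : V) : Prop := ∃ e : G.Dart, e.fst = a ∧ edgePoint e 0 = x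

theorem isVertex_edgePoint_zero (e : G.Dart) : IsVertex (edgePoint e 0) e.fst := ⟨e, rfl, rfl⟩

theorem isVertex_edgePoint_one (e : G.Dart) : IsVertex (edgePoint e 1) e.snd := by
  simpa [edgePoint_symm] using isVertex_edgePoint_zero e.symm

theorem IsVertex.edgePoint_zero {x : TreeSpace G} {e : G.Dart} (hx : IsVertex x e.fst) :
    edgePoint e 0 = x := by
  obtain ⟨e', he', rfl⟩ := hx
  exact Quot.sound (Or.inr ⟨he'.symm, by simp, by simp⟩)

/-- The extension of a function on the vertices that is affine on each edge. -/
def affineExtension (f : V → ℝ≥0) : TreeSpace G → ℝ≥0 :=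
  Quot.lift (fun p => toNNReal (σ p.2) * f p.1.fst + toNNReal p.2 * f p.1.snd) <| by
    rintro ⟨e, t⟩ ⟨e', t'⟩ (⟨rfl, ht⟩ | ⟨he, ht, ht'⟩)
    · obtain rfl : t = σ t' := Subtype.ext ht
      simp [add_comm]
    · obtain rfl : t = 0 := Subtype.ext ht
      obtain rfl : t' = 0 := Subtype.ext ht'
      simpa using congrArg f he

theorem continuous_affineExtension (f : V → ℝ≥0) :
    Continuous (affineExtension f : TreeSpace G → ℝ≥0) := by
  refine continuous_quot_lift _ (continuous_prod_of_discrete_left.2 fun e => ?_)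
  change Continuous fun t : I => toNNReal (σ t) * f e.fst + toNNReal t * f e.snd
  fun_prop

theorem coe_affineExtension_edgePoint (f : V → ℝ≥0) (e : G.Dart) (t : I) :
    (affineExtension f (edgePoint e t) : ℝ) = (1 - t) * f e.fst + t * f e.snd := by
  rw [← mk_eq_edgePoint]
  simp [affineExtension]

theorem affineExtension_of_isVertex (f : V → ℝ≥0) {x : TreeSpace G} {a : V} (hx : IsVertex x a) :
    affineExtension f x = f a := by
  obtain ⟨e, rfl, rfl⟩ := hx
  simpa using coe_affineExtension_edgePoint f e 0

theorem affineExtension_edgePoint_injective {f : V → ℝ≥0} {e : G.Dart} (hf : f e.fst ≠ f e.snd) :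
    Function.Injective fun t : I => affineExtension f (edgePoint e t) := by
  intro t t' h
  have h' := congrArg NNReal.toReal h
  simp only [coe_affineExtension_edgePoint] at h'
  have hprod : ((t : ℝ) - t') * (f e.snd - f e.fst) = 0 := by linear_combination h'
  have hne : (f e.snd - f e.fst : ℝ) ≠ 0 := sub_ne_zero.2 fun h => hf (NNReal.eq h.symm)
  exact Subtype.ext (sub_eq_zero.1 ((mul_eq_zero.1 hprod).resolve_right hne))

theorem isClosed_of_subsingleton_preimage_edgePoint {S : Set (TreeSpace G)}
    (hS : ∀ e : G.Dart, {t : I | edgePoint e t ∈ S}.Subsingleton) : IsClosed S := by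
  refine isQuotientMap_quot_mk.isClosed_preimage.1 ?_
  rw [← isOpen_compl_iff, isOpen_iff_continuous_mem]
  refine continuous_prod_of_discrete_left.2 fun e => isOpen_iff_continuous_mem.1 ?_
  change IsOpen {t : I | Quot.mk _ (e, t) ∉ S}
  simp only [mk_eq_edgePoint]
  exact (hS e).isClosed.isOpen_compl

theorem isDiscrete_fiber_affineExtension {f : V → ℝ≥0} (hf : ∀ e : G.Dart, f e.fst ≠ f e.snd)
    (s : ℝ≥0) : IsDiscrete ((affineExtension f : TreeSpace G → ℝ≥0) ⁻¹' {s}) := by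
  have isClosed_of_subset : ∀ S ⊆ (affineExtension f : TreeSpace G → ℝ≥0) ⁻¹' {s}, IsClosed S :=
    fun S hS => isClosed_of_subsingleton_preimage_edgePoint fun e t ht t' ht' =>
      affineExtension_edgePoint_injective (hf e) ((hS ht).trans (hS ht').symm)
  refine ⟨discreteTopology_iff_forall_isClosed.2 fun S => ?_⟩
  rw [← preimage_image_eq S Subtype.val_injective]
  exact (isClosed_of_subset _ (Subtype.coe_image_subset _ S)).preimage continuous_subtype_val

end Realization

section WalkPath

variable {V : Type*} {G : SimpleGraph V} {o : TreeSpace G} {a b r : V}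

/-- The path of unit speed in the realization that starts in the vertex `o` at the end of a walk
and follows the walk backwards. -/
def walkPath (o : TreeSpace G) : ∀ {a r : V}, G.Walk a r → ℝ≥0 → TreeSpace G
  | _, _, .nil, _ => o
  | _, _, .cons h w, s =>
    if s ≤ w.length then walkPath o w s else edgePoint ⟨(_, _), h.symm⟩ (s - w.length)

theorem walkPath_cons_of_le (h : G.Adj b a) (w : G.Walk a r) {s : ℝ≥0} (hs : s ≤ w.length) :
    walkPath o (.cons h w) s = walkPath o w s :=
  if_pos hs

theorem isVertex_walkPath_length (ho : IsVertex o r) (w : G.Walk a r) :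
    IsVertex (walkPath o w w.length) a := by
  cases w with
  | nil => exact ho
  | cons h w => simpa [walkPath] using isVertex_edgePoint_one ⟨(_, _), h.symm⟩

theorem walkPath_cons_length_add (ho : IsVertex o r) (h : G.Adj b a) (w : G.Walk a r) (t : I) :
    walkPath o (.cons h w) (w.length + toNNReal t) = edgePoint ⟨(a, b), h.symm⟩ t := by
  rcases eq_or_ne t 0 with rfl | ht
  · rw [toNNReal_zero, add_zero, walkPath_cons_of_le h w le_rfl]
    exact (isVertex_walkPath_length ho w).edgePoint_zero.symm
  · have : ¬ toNNReal t ≤ 0 := fun h => ht (Subtype.ext (congrArg NNReal.toReal (le_zero_iff.1 h)))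
    simp [walkPath, this]

theorem continuous_walkPath (ho : IsVertex o r) (w : G.Walk a r) : Continuous (walkPath o w) := by
  induction w with
  | nil => exact continuous_const
  | cons h w ih =>
    refine Continuous.if_le (ih ho) ((continuous_edgePoint _).comp (by fun_prop)) continuous_id
      continuous_const fun s hs => ?_
    subst hs
    rw [NNReal.coe_natCast, sub_self]
    exact (isVertex_walkPath_length ho w).edgePoint_zero.symm

end WalkPath

section RootedTree

variable {V : Type*} {G : SimpleGraph V} {o : TreeSpace G} {a r : V} {e : G.Dart} {s : ℝ≥0}

/-- The distance from the root `r` in the realization of a tree. -/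
def height (r : V) : TreeSpace G → ℝ≥0 := affineExtension fun a => (G.dist r a : ℝ≥0)

/-- The dart `e` points away from the root `r`. -/
def IsAscending (r : V) (e : G.Dart) : Prop := G.dist r e.snd = G.dist r e.fst + 1

theorem isAscending_or_isAscending_symm (hG : G.IsTree) (r : V) (e : G.Dart) :
    IsAscending r e ∨ IsAscending r e.symm :=
  (hG.dist_eq_dist_add_one_of_adj r e.adj).symm

theorem exists_isAscending_edgePoint_eq (hG : G.IsTree) (r : V) (x : TreeSpace G) :
    ∃ e : G.Dart, IsAscending r e ∧ ∃ t : I, edgePoint e t = x := by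
  obtain ⟨e, t⟩ := x
  rcases isAscending_or_isAscending_symm hG r e with he | he
  · exact ⟨e, he, t, (mk_eq_edgePoint e t).symm⟩
  · refine ⟨e.symm, he, σ t, ?_⟩
    rw [edgePoint_symm, coe_symm_eq, sub_sub_cancel, ← mk_eq_edgePoint]

theorem height_edgePoint (he : IsAscending r e) (t : I) :
    height r (edgePoint e t) = G.dist r e.fst + toNNReal t := by
  refine NNReal.eq ?_
  rw [height, coe_affineExtension_edgePoint, he]
  push_cast
  simp only [coe_toNNReal]
  ring

theorem height_walkPath (ho : IsVertex o r) (w : G.Walk a r) (hw : w.length = G.dist r a)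
    (hs : s ≤ G.dist r a) : height r (walkPath o w s) = s := by
  induction w with
  | nil =>
    rw [SimpleGraph.dist_self, Nat.cast_zero, nonpos_iff_eq_zero] at hs
    rw [hs, walkPath, height, affineExtension_of_isVertex _ ho, SimpleGraph.dist_self,
      Nat.cast_zero]
  | @cons b a r h w ih =>
    have hw' : w.length = G.dist r a := by
      rw [G.dist_comm] at hw ⊢
      exact SimpleGraph.length_eq_dist_of_subwalk hw (w.isSubwalk_cons h)
    have he : IsAscending r (⟨(a, b), h.symm⟩ : G.Dart) := by
      rw [IsAscending, ← hw, ← hw', SimpleGraph.Walk.length_cons]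
    rcases le_total s w.length with hsw | hsw
    · rw [walkPath_cons_of_le h w hsw]
      exact ih ho hw' (hw' ▸ hsw)
    · obtain ⟨t, rfl⟩ : ∃ t : I, s = w.length + toNNReal t := by
        rw [← hw, SimpleGraph.Walk.length_cons, Nat.cast_succ, ← NNReal.coe_le_coe] at hs
        rw [← NNReal.coe_le_coe] at hsw
        exact ⟨⟨s - w.length, sub_nonneg.2 hsw, sub_le_iff_le_add'.2 hs⟩, NNReal.eq (by simp)⟩
      rw [walkPath_cons_length_add ho, height_edgePoint he, hw']

/-- A shortest walk from `a` to the root `r`. -/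
def rootWalk (hG : G.IsTree) (r a : V) : G.Walk a r :=
  (hG.connected.exists_walk_length_eq_dist a r).choose

theorem length_rootWalk (hG : G.IsTree) (r a : V) : (rootWalk hG r a).length = G.dist r a :=
  (hG.connected.exists_walk_length_eq_dist a r).choose_spec.trans G.dist_comm

theorem eq_rootWalk (hG : G.IsTree) {w : G.Walk a r} (hw : w.length = G.dist r a) :
    w = rootWalk hG r a :=
  (hG.existsUnique_path a r).unique (w.isPath_of_length_eq_dist (hw.trans G.dist_comm))
    ((rootWalk hG r a).isPath_of_length_eq_dist ((length_rootWalk hG r a).trans G.dist_comm))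

theorem rootWalk_snd (hG : G.IsTree) (he : IsAscending r e) :
    rootWalk hG r e.snd = .cons e.adj.symm (rootWalk hG r e.fst) :=
  (eq_rootWalk hG (by rw [SimpleGraph.Walk.length_cons, length_rootWalk, he])).symm

/-- The endpoint of the dart `e` that is farther from the root `r`. -/
def farEnd (r : V) (e : G.Dart) : V := if G.dist r e.fst ≤ G.dist r e.snd then e.snd else e.fst

theorem farEnd_of_isAscending (he : IsAscending r e) : farEnd r e = e.snd :=
  if_pos (he.symm ▸ Nat.le_succ _)

theorem farEnd_symm_of_isAscending (he : IsAscending r e) : farEnd r e.symm = e.snd :=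
  if_neg (he.symm ▸ Nat.not_succ_le_self _)

theorem farEnd_symm (hG : G.IsTree) (r : V) (e : G.Dart) : farEnd r e.symm = farEnd r e := by
  rcases isAscending_or_isAscending_symm hG r e with he | he
  · rw [farEnd_symm_of_isAscending he, farEnd_of_isAscending he]
  · rw [farEnd_of_isAscending he, ← farEnd_symm_of_isAscending he, e.symm_symm]

theorem walkPath_rootWalk_farEnd (hG : G.IsTree) (hs : s ≤ G.dist r e.fst) :
    walkPath o (rootWalk hG r (farEnd r e)) s = walkPath o (rootWalk hG r e.fst) s := by
  rcases isAscending_or_isAscending_symm hG r e with he | he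
  · rw [farEnd_of_isAscending he, rootWalk_snd hG he, walkPath_cons_of_le]
    rwa [length_rootWalk]
  · rw [← farEnd_symm hG, farEnd_of_isAscending he]
    rfl

/-- Moves the point `x` towards the root `r`, represented by the point `o`, until its height is at
most `s`. -/
def truncate (hG : G.IsTree) (r : V) (o : TreeSpace G) (s : ℝ≥0) : TreeSpace G → TreeSpace G :=
  Quot.lift
    (fun p => walkPath o (rootWalk hG r (farEnd r p.1)) (min s (height r (Quot.mk _ p)))) <| by
    intro p q hpq
    rw [Quot.sound hpq]
    obtain ⟨e, t⟩ := p
    obtain ⟨e', t'⟩ := q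
    rcases hpq with ⟨rfl, -⟩ | ⟨he, -, ht'⟩
    · rw [farEnd_symm hG]
    · have hheight : height r (Quot.mk _ (e', t')) = G.dist r e'.fst := by
        rw [mk_eq_edgePoint, ht']
        exact affineExtension_of_isVertex _ (isVertex_edgePoint_zero e')
      rw [hheight]
      have hmin : min s (G.dist r e'.fst : ℝ≥0) ≤ G.dist r e'.fst := min_le_right _ _
      rw [walkPath_rootWalk_farEnd hG hmin, walkPath_rootWalk_farEnd hG (he ▸ hmin), he]

theorem truncate_edgePoint (hG : G.IsTree) (he : IsAscending r e) (s : ℝ≥0) (t : I) :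
    truncate hG r o s (edgePoint e t) =
      walkPath o (rootWalk hG r e.snd) (min s (height r (edgePoint e t))) := by
  rw [← farEnd_of_isAscending he, ← mk_eq_edgePoint]
  rfl

theorem continuous_truncate (hG : G.IsTree) (ho : IsVertex o r) :
    Continuous (Function.uncurry (truncate hG r o)) := by
  have continuous_walkPath_farEnd :
      Continuous fun q : G.Dart × ℝ≥0 => walkPath o (rootWalk hG r (farEnd r q.1)) q.2 :=
    continuous_prod_of_discrete_left.2 fun e =>
      continuous_walkPath ho (rootWalk hG r (farEnd r e))
  have continuous_height_mk : Continuous fun p : G.Dart × I => height r (Quot.mk (treeRel G) p) :=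
    (continuous_affineExtension _).comp continuous_quot_mk
  exact isQuotientMap_quot_mk.continuous_lift_prod_right (continuous_walkPath_farEnd.comp <|
    (continuous_fst.comp continuous_snd).prodMk <|
      continuous_fst.min (continuous_height_mk.comp continuous_snd))

theorem height_truncate (hG : G.IsTree) (ho : IsVertex o r) (s : ℝ≥0) (x : TreeSpace G) :
    height r (truncate hG r o s x) = min s (height r x) := by
  obtain ⟨e, he, t, rfl⟩ := exists_isAscending_edgePoint_eq hG r x
  rw [truncate_edgePoint hG he]
  refine height_walkPath ho _ (length_rootWalk hG r _) ((min_le_right _ _).trans ?_)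
  rw [height_edgePoint he, he, Nat.cast_succ]
  gcongr
  exact t.2.2

theorem truncate_of_height_le (hG : G.IsTree) (ho : IsVertex o r) {x : TreeSpace G}
    (hx : height r x ≤ s) : truncate hG r o s x = x := by
  obtain ⟨e, he, t, rfl⟩ := exists_isAscending_edgePoint_eq hG r x
  rw [truncate_edgePoint hG he, min_eq_right hx, rootWalk_snd hG he, height_edgePoint he,
    ← length_rootWalk hG, walkPath_cons_length_add ho]

/-- The height above the root `r`, which is realized by the point `o`, and the truncations of the
realization of a tree. -/
def heightTruncation (hG : G.IsTree) (ho : IsVertex o r) : HeightTruncation (TreeSpace G) where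
  height := height r
  truncate := truncate hG r o
  continuous_height := continuous_affineExtension _
  continuous_truncate := continuous_truncate hG ho
  isDiscrete_fiber := isDiscrete_fiber_affineExtension fun e h =>
    hG.dist_ne_of_adj r e.adj (Nat.cast_injective h)
  height_truncate := height_truncate hG ho
  truncate_of_height_le := truncate_of_height_le hG ho

theorem nonempty_heightTruncation (hG : G.IsTree) : Nonempty (HeightTruncation (TreeSpace G)) := by
  rcases isEmpty_or_nonempty G.Dart with _ | ⟨⟨e⟩⟩
  · have : IsEmpty (TreeSpace G) := inferInstanceAs (IsEmpty (Quot (treeRel G)))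
    exact ⟨.ofDiscreteTopology⟩
  · exact ⟨heightTruncation hG (isVertex_edgePoint_zero e)⟩

end RootedTree

end TreeSpace

theorem stmt16_general {V : Type*} (G : SimpleGraph V) (hconn : G.Connected) (hacyc : G.IsAcyclic)
    {X : Type*} [MetricSpace X] (hX : Nonempty (X ≃ₜ TreeSpace G)) (d : MergeTreeData) :
    ∃ H : C(↥unitInterval × {F : d.Leaf → NonemptyCompacts X // MinCond d F},
            {F : d.Leaf → NonemptyCompacts X // MinCond d F}),
      (∀ a, H (0, a) = a) ∧
      (∀ a l, ∃ x : X, ((H (1, a)).1 l : Set X) = {x}) ∧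
      (∀ a, (∀ l, ∃ x : X, ((a.1 l : Set X)) = {x}) → ∀ u, H (u, a) = a) := by
  obtain ⟨e⟩ := hX
  obtain ⟨T₀⟩ := TreeSpace.nonempty_heightTruncation ⟨hconn, hacyc⟩
  let T := T₀.comap e
  refine ⟨T.contractConf d, fun a => ?_, fun a l => ?_, fun a ha u => ?_⟩
  · exact Subtype.ext <| funext fun l => T.contract_zero (a.1 l)
  · exact exists_eq_singleton_iff_nonempty_subsingleton.2
      ⟨(T.contract 1 (a.1 l)).nonempty, T.contract_one_subsingleton (a.2.1 l).isPreconnected⟩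
  · refine Subtype.ext <| funext fun l => T.contract_of_subsingleton ?_ u
    obtain ⟨x, hx⟩ := ha l
    exact hx ▸ subsingleton_singleton

open TopologicalSpace in
/-- For a geometric tree `X` (a compact metric space homeomorphic to the realization of a
finite connected acyclic graph) and a generic cellular merge tree `T`, the space
`Conf_Min(X,T)` of constrained configurations of disjoint connected closed sets (with the
Hausdorff metric topology) strongly deformation retracts onto the subspace `Conf(X,T)` of
point (singleton) configurations; in particular the two spaces are homotopy equivalent. -/
theorem stmt16 {V : Type} [Fintype V] (G : SimpleGraph V)
    (hconn : G.Connected) (hacyc : G.IsAcyclic)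
    {X : Type} [MetricSpace X] [CompactSpace X] (hX : Nonempty (X ≃ₜ TreeSpace G))
    (d : MergeTreeData) (hgen : d.Generic) :
    ∃ H : C(↥unitInterval × {F : d.Leaf → NonemptyCompacts X // MinCond d F},
            {F : d.Leaf → NonemptyCompacts X // MinCond d F}),
      (∀ a, H (0, a) = a) ∧
      (∀ a l, ∃ x : X, ((H (1, a)).1 l : Set X) = {x}) ∧
      (∀ a, (∀ l, ∃ x : X, ((a.1 l : Set X)) = {x}) → ∀ u, H (u, a) = a) :=
  stmt16_general G hconn hacyc hX d
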